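/- If β ≠ 0, then every invertible element of the down-up algebra A(α,β,φ) over K[t₁,…,tₙ] is a nonzero scalar in K. -/

import Mathlib

open MvPolynomial

namespace DownUp

inductive Gen | u | d

variable {K : Type} [Field K] {n : ℕ}

/-- Free algebra over the polynomial base ring on generators u, d. -/
abbrev F (K : Type) [Field K] (n : ℕ) := FreeAlgebra (MvPolynomial (Fin n) K) Gen

noncomputable def uF : F K n := FreeAlgebra.ι _ Gen.u
noncomputable def dF : F K n := FreeAlgebra.ι _ Gen.d

/-- The defining relations of the down-up algebra over K[t₁,…,tₙ]. -/
inductive Rel (α β : K) (φ : MvPolynomial (Fin n) K) : F K n → F K n → Prop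
  | ddu : Rel α β φ (dF * dF * uF)
      (α • (dF * uF * dF) + β • (uF * dF * dF) + algebraMap _ _ φ * dF)
  | duu : Rel α β φ (dF * uF * uF)
      (α • (uF * dF * uF) + β • (uF * uF * dF) + uF * algebraMap _ _ φ)

/-- The down-up algebra A(α,β,φ) over K[t₁,…,tₙ]. -/
abbrev A (α β : K) (φ : MvPolynomial (Fin n) K) := RingQuot (Rel α β φ)

noncomputable def U (α β : K) (φ : MvPolynomial (Fin n) K) : A α β φ :=
  RingQuot.mkAlgHom K _ uF
noncomputable def D (α β : K) (φ : MvPolynomial (Fin n) K) : A α β φ :=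
  RingQuot.mkAlgHom K _ dF

/-- Image of the base polynomial ring in A. -/
noncomputable def T (α β : K) (φ : MvPolynomial (Fin n) K) :
    MvPolynomial (Fin n) K →ₐ[K] A α β φ :=
  (RingQuot.mkAlgHom K (Rel α β φ)).comp (IsScalarTower.toAlgHom K (MvPolynomial (Fin n) K) (F K n))

end DownUp

/-!
Let `B = R[x, y]` and let `σ` be the automorphism `x ↦ y ↦ a y + b x + φ`, which is invertible
because `b` is a unit. Sending `x` to `ud` and `y` to `du` turns the down-up algebra into the
generalized Weyl algebra of `(B, σ, x)`: it is spanned over `B` by the monomials `w_k = d ^ k` and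
`w_{-k} = u ^ k`, and `d ↦ z`, `u ↦ x z⁻¹` maps it to the skew Laurent ring `B[z, z⁻¹; σ]`. Under
this map `w_k ↦ c_k z ^ k` with `c_k ≠ 0`, so the map is injective, and `x ∣ c_k` for `k < 0`.

A unit of the skew Laurent ring is homogeneous with unit coefficient. As `x` is not a unit, a unit
of the down-up algebra cannot have negative degree; neither can its inverse, so it has degree `0`
and lies in `B`, whose units are those of `R`.
-/

namespace DownUp

open SkewMonoidAlgebra (single single_mul_single)

section SkewGroupRing

variable {k G : Type*} [Semiring k]

theorem coeff_mul_of_uniqueMul [Monoid G] [MulSemiringAction G k] {x y : SkewMonoidAlgebra k G}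
    {p q : G} (h : UniqueMul x.support y.support p q) :
    (x * y).coeff (p * q) = x.coeff p * p • y.coeff q := by
  classical
  have coeff_mul_eq_sum : (x * y).coeff (p * q) = ∑ ab ∈ x.support ×ˢ y.support,
      if ab.1 * ab.2 = p * q then x.coeff ab.1 * ab.1 • y.coeff ab.2 else 0 := by
    rw [SkewMonoidAlgebra.coeff_mul, Finset.sum_product]
    rfl
  rw [coeff_mul_eq_sum, Finset.sum_eq_single (p, q), if_pos rfl]
  · rintro ⟨a, b⟩ hab hne
    obtain ⟨ha, hb⟩ := Finset.mem_product.1 hab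
    exact if_neg fun h' ↦ hne (Prod.ext_iff.2 (h ha hb h'))
  · intro hpq
    rw [Finset.mem_product, not_and_or, SkewMonoidAlgebra.notMem_support_iff,
      SkewMonoidAlgebra.notMem_support_iff] at hpq
    rcases hpq with hp | hq
    · simp [hp]
    · simp [hq]

variable [NoZeroDivisors k] [Group G] [MulSemiringAction G k] {x y : SkewMonoidAlgebra k G}

theorem mul_eq_one_of_uniqueMul (hxy : x * y = 1) {p q : G} (hp : p ∈ x.support)
    (hq : q ∈ y.support) (h : UniqueMul x.support y.support p q) : p * q = 1 := by
  by_contra hne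
  have hcoeff := coeff_mul_of_uniqueMul h
  rw [hxy, SkewMonoidAlgebra.coeff_one, Finsupp.single_eq_of_ne hne, eq_comm, mul_eq_zero,
    smul_eq_zero_iff_eq] at hcoeff
  rw [SkewMonoidAlgebra.mem_support_iff] at hp hq
  exact hcoeff.elim hp hq

theorem card_support_mul_card_support_le_one [TwoUniqueProds G] (hxy : x * y = 1) :
    x.support.card * y.support.card ≤ 1 := by
  by_contra! hcard
  obtain ⟨p, hp, q, hq, hne, hp_unique, hq_unique⟩ :=
    TwoUniqueProds.uniqueMul_of_one_lt_card hcard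
  rw [Finset.mem_product] at hp hq
  have hp_one := mul_eq_one_of_uniqueMul hxy hp.1 hp.2 hp_unique
  have hq_one := mul_eq_one_of_uniqueMul hxy hq.1 hq.2 hq_unique
  obtain ⟨h₁, h₂⟩ := hp_unique hq.1 hq.2 (hq_one.trans hp_one.symm)
  exact hne (Prod.ext h₁.symm h₂.symm)

theorem exists_eq_single_of_mul_eq_one [Nontrivial k] [TwoUniqueProds G] (hxy : x * y = 1) :
    ∃ (g : G) (b c : k), x = single g b ∧ y = single g⁻¹ c ∧ b * g • c = 1 := by
  have hx : x.support.card ≠ 0 := by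
    rw [Finset.card_ne_zero, Finset.nonempty_iff_ne_empty, Ne, SkewMonoidAlgebra.support_eq_empty]
    exact left_ne_zero_of_mul_eq_one hxy
  have hy : y.support.card ≠ 0 := by
    rw [Finset.card_ne_zero, Finset.nonempty_iff_ne_empty, Ne, SkewMonoidAlgebra.support_eq_empty]
    exact right_ne_zero_of_mul_eq_one hxy
  have hcard : x.support.card * y.support.card = 1 :=
    (card_support_mul_card_support_le_one hxy).antisymm
      (Nat.one_le_iff_ne_zero.2 (mul_ne_zero hx hy))
  obtain ⟨g, b, -, hxb⟩ := Finsupp.card_support_eq_one'.1 (Nat.eq_one_of_mul_eq_one_right hcard)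
  obtain ⟨g', c, -, hyc⟩ := Finsupp.card_support_eq_one'.1 (Nat.eq_one_of_mul_eq_one_left hcard)
  obtain rfl : x = single g b := SkewMonoidAlgebra.coeff_injective hxb
  obtain rfl : y = single g' c := SkewMonoidAlgebra.coeff_injective hyc
  rw [single_mul_single] at hxy
  have hcoeff := congrArg SkewMonoidAlgebra.coeff hxy
  rw [SkewMonoidAlgebra.coeff_single, SkewMonoidAlgebra.coeff_one,
    Finsupp.single_eq_single_iff] at hcoeff
  obtain ⟨hgg', hbc⟩ := hcoeff.resolve_right fun h ↦ one_ne_zero h.2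
  exact ⟨g, b, c, rfl, by rw [eq_inv_of_mul_eq_one_right hgg'], hbc⟩

end SkewGroupRing

section SkewLaurent

variable {R B : Type*} [CommSemiring R] [CommSemiring B] [Algebra R B] (σ : B ≃ₐ[R] B)

/-- The infinite cyclic group acting on `B` through the powers of `σ`. It is a copy of
`Multiplicative ℤ` carrying `σ` in its type, so that the action can be found by instance search. -/
def IntegerPowers (_σ : B ≃ₐ[R] B) : Type :=
  Multiplicative ℤ

namespace IntegerPowers

instance : CommGroup (IntegerPowers σ) :=
  inferInstanceAs (CommGroup (Multiplicative ℤ))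

instance : TwoUniqueProds (IntegerPowers σ) :=
  inferInstanceAs (TwoUniqueProds (Multiplicative ℤ))

instance : MulSemiringAction (IntegerPowers σ) B :=
  MulSemiringAction.compHom B (zpowersHom (B ≃ₐ[R] B) σ)

/-- The element of the cyclic group `IntegerPowers σ` that acts as `σ ^ k`. -/
def power (k : ℤ) : IntegerPowers σ :=
  Multiplicative.ofAdd k

theorem power_injective : Function.Injective (power σ) :=
  Multiplicative.ofAdd.injective

theorem power_surjective : Function.Surjective (power σ) :=
  Multiplicative.ofAdd.surjective

theorem power_zero : power σ 0 = 1 :=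
  rfl

theorem power_neg (k : ℤ) : power σ (-k) = (power σ k)⁻¹ :=
  rfl

theorem power_mul_power (k l : ℤ) : power σ k * power σ l = power σ (k + l) :=
  rfl

theorem power_smul (k : ℤ) (b : B) : power σ k • b = (σ ^ k) b :=
  rfl

instance : SMulCommClass (IntegerPowers σ) R B where
  smul_comm g r b := by
    obtain ⟨k, rfl⟩ := power_surjective σ g
    exact map_smul (σ ^ k) r b

end IntegerPowers

open IntegerPowers

/-- The skew Laurent polynomial ring `B[z, z⁻¹; σ]`, in which `z * b = σ b * z`. The monomial
`b * z ^ k` is `single (power σ k) b`. -/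
abbrev SkewLaurent : Type _ :=
  SkewMonoidAlgebra B (IntegerPowers σ)

namespace SkewLaurent

theorem single_power_mul (k l : ℤ) (b c : B) :
    (single (power σ k) b * single (power σ l) c : SkewLaurent σ) =
      single (power σ (k + l)) (b * (σ ^ k) c) := by
  rw [single_mul_single, power_mul_power, power_smul]

theorem single_power_pow (k : ℤ) (b : B) (n : ℕ) :
    (single (power σ k) b : SkewLaurent σ) ^ n =
      single (power σ (n * k)) (∏ i ∈ Finset.range n, (σ ^ (i * k)) b) := by
  induction n with
  | zero => simp [power_zero]
  | succ n ih =>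
    rw [pow_succ, ih, single_power_mul, Finset.prod_range_succ, Nat.cast_succ, add_one_mul]

/-- The inclusion of the coefficient ring `B` into `B[z, z⁻¹; σ]`. -/
noncomputable def coeffHom : B →ₐ[R] SkewLaurent σ :=
  { SkewMonoidAlgebra.singleOneRingHom with commutes' := fun _ ↦ rfl }

theorem coeffHom_apply (b : B) : coeffHom σ b = single (power σ 0) b :=
  rfl

end SkewLaurent

end SkewLaurent

section GeneralizedWeyl

open IntegerPowers SkewLaurent

variable {R B S : Type*} [CommSemiring R] [CommSemiring B] [Algebra R B] [Semiring S]
  [Algebra R S]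

/-- The defining relations of the generalized Weyl algebra of `(B, σ, h)`, for elements `u`, `d` of
an algebra `S` to which `B` is mapped by `ι`. -/
structure IsGeneralizedWeyl (σ : B ≃ₐ[R] B) (h : B) (ι : B →ₐ[R] S) (u d : S) : Prop where
  semiconjBy_d : ∀ b, SemiconjBy d (ι b) (ι (σ b))
  semiconjBy_u : ∀ b, SemiconjBy u (ι (σ b)) (ι b)
  u_mul_d : u * d = ι h
  d_mul_u : d * u = ι (σ h)

/-- The homogeneous monomial of degree `k`, where `d` has degree `1` and `u` has degree `-1`:
`d ^ k` for `0 ≤ k`, and `u ^ (-k)` for `k < 0`. -/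
def weylMonomial (u d : S) : ℤ → S
  | Int.ofNat n => d ^ n
  | Int.negSucc n => u ^ (n + 1)

theorem map_weylMonomial {S' : Type*} [Semiring S'] [Algebra R S'] (Φ : S →ₐ[R] S') (u d : S)
    (k : ℤ) : Φ (weylMonomial u d k) = weylMonomial (Φ u) (Φ d) k := by
  cases k <;> exact map_pow Φ _ _

/-- The combination `∑ k, ι (f k) * w_k` of the monomials `w_k = weylMonomial u d k`. -/
noncomputable def normalForm (ι : B →ₐ[R] S) (u d : S) : (ℤ →₀ B) →+ S :=
  Finsupp.liftAddHom fun k ↦ (AddMonoidHom.mulRight (weylMonomial u d k)).comp (ι : B →+ S)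

theorem normalForm_single (ι : B →ₐ[R] S) (u d : S) (k : ℤ) (b : B) :
    normalForm ι u d (Finsupp.single k b) = ι b * weylMonomial u d k :=
  Finsupp.liftAddHom_apply_single _ _ _

theorem map_normalForm {S' : Type*} [Semiring S'] [Algebra R S'] (Φ : S →ₐ[R] S') (ι : B →ₐ[R] S)
    (u d : S) (f : ℤ →₀ B) :
    Φ (normalForm ι u d f) = normalForm (Φ.comp ι) (Φ u) (Φ d) f := by
  induction f using Finsupp.induction_linear with
  | zero => simp
  | add f g hf hg => simp only [map_add, hf, hg]
  | single k b =>
    rw [normalForm_single, normalForm_single, map_mul, map_weylMonomial, AlgHom.comp_apply]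

variable {σ : B ≃ₐ[R] B} {h : B} {ι : B →ₐ[R] S} {u d : S}

namespace IsGeneralizedWeyl

theorem exists_d_mul_weylMonomial (H : IsGeneralizedWeyl σ h ι u d) (k : ℤ) :
    ∃ c, d * weylMonomial u d k = ι c * weylMonomial u d (k + 1) := by
  match k with
  | Int.ofNat n => exact ⟨1, by rw [map_one, one_mul]; exact (pow_succ' d n).symm⟩
  | Int.negSucc 0 => exact ⟨σ h, by simp [weylMonomial, H.d_mul_u]⟩
  | Int.negSucc (n + 1) =>
    refine ⟨σ h, ?_⟩
    change d * u ^ (n + 2) = ι (σ h) * u ^ (n + 1)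
    rw [pow_succ', ← mul_assoc, H.d_mul_u]

theorem exists_u_mul_weylMonomial (H : IsGeneralizedWeyl σ h ι u d) (k : ℤ) :
    ∃ c, u * weylMonomial u d k = ι c * weylMonomial u d (k - 1) := by
  match k with
  | Int.ofNat 0 =>
    refine ⟨1, ?_⟩
    change u * d ^ 0 = ι 1 * u ^ 1
    simp
  | Int.ofNat (n + 1) =>
    refine ⟨h, ?_⟩
    rw [show Int.ofNat (n + 1) - 1 = Int.ofNat n by simp]
    change u * d ^ (n + 1) = ι h * d ^ n
    rw [pow_succ', ← mul_assoc, H.u_mul_d]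
  | Int.negSucc n => exact ⟨1, by rw [map_one, one_mul]; exact (pow_succ' u (n + 1)).symm⟩

theorem d_mul_mem_range_normalForm (H : IsGeneralizedWeyl σ h ι u d) (f : ℤ →₀ B) :
    d * normalForm ι u d f ∈ AddMonoidHom.mrange (normalForm ι u d) := by
  induction f using Finsupp.induction_linear with
  | zero => simp
  | add f g hf hg => rw [map_add, mul_add]; exact add_mem hf hg
  | single k b =>
    obtain ⟨c, hc⟩ := H.exists_d_mul_weylMonomial k
    refine ⟨Finsupp.single (k + 1) (σ b * c), ?_⟩
    rw [normalForm_single, normalForm_single, ← mul_assoc, (H.semiconjBy_d b).eq, mul_assoc, hc,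
      map_mul, mul_assoc]

theorem u_mul_mem_range_normalForm (H : IsGeneralizedWeyl σ h ι u d) (f : ℤ →₀ B) :
    u * normalForm ι u d f ∈ AddMonoidHom.mrange (normalForm ι u d) := by
  induction f using Finsupp.induction_linear with
  | zero => simp
  | add f g hf hg => rw [map_add, mul_add]; exact add_mem hf hg
  | single k b =>
    obtain ⟨c, hc⟩ := H.exists_u_mul_weylMonomial k
    refine ⟨Finsupp.single (k - 1) (σ.symm b * c), ?_⟩
    have hub := (H.semiconjBy_u (σ.symm b)).eq
    rw [σ.apply_symm_apply] at hub
    rw [normalForm_single, normalForm_single, ← mul_assoc, hub, mul_assoc, hc, map_mul, mul_assoc]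

end IsGeneralizedWeyl

theorem algebraMap_mul_normalForm (r : R) (f : ℤ →₀ B) :
    algebraMap R S r * normalForm ι u d f = normalForm ι u d (r • f) := by
  induction f using Finsupp.induction_linear with
  | zero => simp
  | add f g hf hg => rw [map_add, mul_add, hf, hg, smul_add, map_add]
  | single k b =>
    rw [Finsupp.smul_single, normalForm_single, normalForm_single, map_smul, Algebra.smul_def,
      mul_assoc]

theorem IsGeneralizedWeyl.normalForm_surjective (H : IsGeneralizedWeyl σ h ι u d)
    (hgen : Algebra.adjoin R {u, d} = ⊤) : Function.Surjective (normalForm ι u d) := by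
  have mul_mem : ∀ x ∈ Algebra.adjoin R {u, d}, ∀ y ∈ AddMonoidHom.mrange (normalForm ι u d),
      x * y ∈ AddMonoidHom.mrange (normalForm ι u d) := by
    intro x hx
    induction hx using Algebra.adjoin_induction with
    | mem x hx =>
      rintro _ ⟨f, rfl⟩
      rcases hx with rfl | rfl
      · exact H.u_mul_mem_range_normalForm f
      · exact H.d_mul_mem_range_normalForm f
    | algebraMap r =>
      rintro _ ⟨f, rfl⟩
      exact ⟨r • f, (algebraMap_mul_normalForm r f).symm⟩
    | add x x' _ _ hx hx' => exact fun y hy ↦ add_mul x x' y ▸ add_mem (hx y hy) (hx' y hy)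
    | mul x x' _ _ hx hx' => exact fun y hy ↦ mul_assoc x x' y ▸ hx _ (hx' y hy)
  have one_mem : 1 ∈ AddMonoidHom.mrange (normalForm ι u d) :=
    ⟨Finsupp.single 0 1, by rw [normalForm_single, map_one, one_mul]; exact pow_zero d⟩
  intro x
  simpa using mul_mem x (hgen ▸ Algebra.mem_top) 1 one_mem

variable (σ h)

theorem isGeneralizedWeyl_skewLaurent :
    IsGeneralizedWeyl σ h (coeffHom σ) (single (power σ (-1)) h) (single (power σ 1) 1) where
  semiconjBy_d b := by
    rw [SemiconjBy, coeffHom_apply, coeffHom_apply, single_power_mul, single_power_mul]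
    simp
  semiconjBy_u b := by
    rw [SemiconjBy, coeffHom_apply, coeffHom_apply, single_power_mul, single_power_mul]
    simp [mul_comm]
  u_mul_d := by
    rw [coeffHom_apply, single_power_mul]
    simp
  d_mul_u := by
    rw [coeffHom_apply, single_power_mul]
    simp

/-- The coefficient `c_k` of the image `c_k * z ^ k` of `weylMonomial u d k` in `B[z, z⁻¹; σ]`
under `u ↦ h * z⁻¹`, `d ↦ z`. -/
noncomputable def weylCoeff : ℤ → B
  | Int.ofNat _ => 1
  | Int.negSucc n => ∏ i ∈ Finset.range (n + 1), (σ ^ (i * (-1 : ℤ))) h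

theorem weylMonomial_skewLaurent (k : ℤ) :
    weylMonomial (single (power σ (-1)) h) (single (power σ 1) 1 : SkewLaurent σ) k =
      single (power σ k) (weylCoeff σ h k) := by
  cases k with
  | ofNat n => simp [weylMonomial, weylCoeff, single_power_pow]
  | negSucc n =>
    rw [weylMonomial, weylCoeff, single_power_pow, mul_neg_one, Int.negSucc_eq, Nat.cast_succ]

variable {h} in
theorem weylCoeff_ne_zero [IsDomain B] (hh : h ≠ 0) (k : ℤ) : weylCoeff σ h k ≠ 0 := by
  cases k with
  | ofNat n => exact one_ne_zero
  | negSucc n =>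
    exact Finset.prod_ne_zero_iff.2 fun i _ ↦ (map_ne_zero_iff _ (AlgEquiv.injective _)).2 hh

theorem dvd_weylCoeff {k : ℤ} (hk : k < 0) : h ∣ weylCoeff σ h k := by
  obtain ⟨n, rfl⟩ := Int.eq_negSucc_of_lt_zero hk
  have first_factor : (σ ^ ((0 : ℕ) * (-1 : ℤ))) h = h := by simp
  conv_lhs => rw [← first_factor]
  exact Finset.dvd_prod_of_mem (fun i : ℕ ↦ (σ ^ (i * (-1 : ℤ))) h)
    (Finset.mem_range.2 n.succ_pos)

theorem coeff_normalForm_skewLaurent (f : ℤ →₀ B) (k : ℤ) :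
    (normalForm (coeffHom σ) (single (power σ (-1)) h) (single (power σ 1) 1) f).coeff
      (power σ k) = f k * weylCoeff σ h k := by
  classical
  induction f using Finsupp.induction_linear with
  | zero => simp
  | add f g hf hg => simp [hf, hg, add_mul]
  | single j b =>
    rw [normalForm_single, weylMonomial_skewLaurent, coeffHom_apply, single_power_mul, zero_add,
      SkewMonoidAlgebra.coeff_single_apply, Finsupp.single_apply]
    by_cases hjk : j = k
    · subst hjk; simp
    · simp [hjk, (power_injective σ).eq_iff]

variable {σ h} {Φ : S →ₐ[R] SkewLaurent σ}

theorem coeff_map_normalForm (hι : Φ.comp ι = coeffHom σ) (hu : Φ u = single (power σ (-1)) h)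
    (hd : Φ d = single (power σ 1) 1) (f : ℤ →₀ B) (k : ℤ) :
    (Φ (normalForm ι u d f)).coeff (power σ k) = f k * weylCoeff σ h k := by
  rw [map_normalForm, hι, hu, hd, coeff_normalForm_skewLaurent]

theorem nonneg_of_map_eq_single (hh : ¬IsUnit h) (hι : Φ.comp ι = coeffHom σ)
    (hu : Φ u = single (power σ (-1)) h) (hd : Φ d = single (power σ 1) 1)
    (hsurj : Function.Surjective (normalForm ι u d)) {x : S} {k : ℤ} {b : B} (hb : IsUnit b)
    (hx : Φ x = single (power σ k) b) : 0 ≤ k := by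
  by_contra! hk
  obtain ⟨f, rfl⟩ := hsurj x
  have hfb : f k * weylCoeff σ h k = b := by
    rw [← coeff_map_normalForm hι hu hd, hx, SkewMonoidAlgebra.coeff_single, Finsupp.single_eq_same]
  have hdvd : h ∣ b := hfb ▸ (dvd_weylCoeff σ h hk).mul_left (f k)
  exact hh (isUnit_of_dvd_unit hdvd hb)

variable [IsDomain B]

theorem injective_of_normalForm_surjective (hh : h ≠ 0) (hι : Φ.comp ι = coeffHom σ)
    (hu : Φ u = single (power σ (-1)) h) (hd : Φ d = single (power σ 1) 1)
    (hsurj : Function.Surjective (normalForm ι u d)) : Function.Injective Φ := by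
  intro x y hxy
  obtain ⟨f, rfl⟩ := hsurj x
  obtain ⟨g, rfl⟩ := hsurj y
  congr 1
  ext k
  apply mul_right_cancel₀ (weylCoeff_ne_zero σ hh k)
  rw [← coeff_map_normalForm hι hu hd, hxy, coeff_map_normalForm hι hu hd]

theorem exists_isUnit_eq_of_isUnit (hh₀ : h ≠ 0) (hh : ¬IsUnit h) (hι : Φ.comp ι = coeffHom σ)
    (hu : Φ u = single (power σ (-1)) h) (hd : Φ d = single (power σ 1) 1)
    (hsurj : Function.Surjective (normalForm ι u d)) {x : S} (hx : IsUnit x) :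
    ∃ b, IsUnit b ∧ x = ι b := by
  obtain ⟨y, hxy⟩ := hx.exists_right_inv
  have hΦ : Φ x * Φ y = 1 := by rw [← map_mul, hxy, map_one]
  obtain ⟨g, b, c, hxb, hyc, hbc⟩ := exists_eq_single_of_mul_eq_one hΦ
  obtain ⟨k, rfl⟩ := power_surjective σ g
  rw [← power_neg] at hyc
  have hb : IsUnit b := .of_mul_eq_one _ hbc
  have hc : IsUnit c :=
    (isUnit_map_iff (σ ^ k) c).1 (.of_mul_eq_one_right b hbc)
  have hk := nonneg_of_map_eq_single hh hι hu hd hsurj hb hxb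
  have hk' := nonneg_of_map_eq_single hh hι hu hd hsurj hc hyc
  obtain rfl : k = 0 := by lia
  refine ⟨b, hb, injective_of_normalForm_surjective hh₀ hι hu hd hsurj ?_⟩
  rw [hxb, ← coeffHom_apply, ← hι, AlgHom.comp_apply]

end GeneralizedWeyl

section MvPolynomial

open scoped IsMulCommutative

variable {R S τ : Type*} [CommSemiring R] [Semiring S] [Algebra R S]

theorem isMulCommutative_adjoin_range {x : τ → S} (hx : ∀ i j, Commute (x i) (x j)) :
    IsMulCommutative (Algebra.adjoin R (Set.range x)) :=
  Algebra.isMulCommutative_adjoin R (by rintro _ ⟨i, rfl⟩ _ ⟨j, rfl⟩; exact hx i j)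

/-- Evaluation of polynomials at pairwise commuting elements of a noncommutative algebra. -/
noncomputable def aevalOfCommute (x : τ → S) (hx : ∀ i j, Commute (x i) (x j)) :
    MvPolynomial τ R →ₐ[R] S :=
  have := isMulCommutative_adjoin_range (R := R) hx
  (Algebra.adjoin R (Set.range x)).val.comp
    (aeval fun i ↦ ⟨x i, Algebra.subset_adjoin (Set.mem_range_self i)⟩)

theorem aevalOfCommute_X (x : τ → S) (hx : ∀ i j, Commute (x i) (x j)) (i : τ) :
    aevalOfCommute (R := R) x hx (X i) = x i := by
  have := isMulCommutative_adjoin_range (R := R) hx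
  exact congrArg Subtype.val (aeval_X _ i)

theorem semiconjBy_algHom_of_X {f g : MvPolynomial τ R →ₐ[R] S} {s : S}
    (hX : ∀ i, SemiconjBy s (f (X i)) (g (X i))) (p : MvPolynomial τ R) :
    SemiconjBy s (f p) (g p) := by
  induction p using MvPolynomial.induction_on with
  | C r =>
    rw [← algebraMap_eq, AlgHom.commutes, AlgHom.commutes]
    exact (Algebra.commutes r s).symm
  | add p q hp hq => rw [map_add, map_add]; exact hp.add_right hq
  | mul_X p i hp => rw [map_mul, map_mul]; exact hp.mul_right (hX i)

end MvPolynomial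

section DownUpAlgebra

variable {R S : Type*} [CommSemiring R] [Semiring S] [Algebra R S]

/-- The relations of the down-up algebra over an arbitrary commutative semiring, with the
coefficients acting by scalar multiplication. -/
inductive DownUpRel (a b φ : R) : FreeAlgebra R Gen → FreeAlgebra R Gen → Prop
  | ddu : DownUpRel a b φ (.ι R .d * .ι R .d * .ι R .u)
      (a • (.ι R .d * .ι R .u * .ι R .d) + b • (.ι R .u * .ι R .d * .ι R .d) + φ • .ι R .d)
  | duu : DownUpRel a b φ (.ι R .d * .ι R .u * .ι R .u)
      (a • (.ι R .u * .ι R .d * .ι R .u) + b • (.ι R .u * .ι R .u * .ι R .d) + φ • .ι R .u)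

/-- The down-up algebra over a commutative semiring `R`. -/
abbrev DownUpAlgebra (a b φ : R) : Type _ :=
  RingQuot (DownUpRel a b φ)

/-- Elements `u`, `d` of an `R`-algebra satisfying the down-up relations. -/
structure IsDownUpPair (a b φ : R) (u d : S) : Prop where
  ddu : d * d * u = a • (d * u * d) + b • (u * d * d) + φ • d
  duu : d * u * u = a • (u * d * u) + b • (u * u * d) + φ • u

namespace DownUpAlgebra

variable (a b φ : R)

/-- The generator `u` of the down-up algebra. -/
noncomputable def up : DownUpAlgebra a b φ :=
  RingQuot.mkAlgHom R _ (.ι R .u)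

/-- The generator `d` of the down-up algebra. -/
noncomputable def down : DownUpAlgebra a b φ :=
  RingQuot.mkAlgHom R _ (.ι R .d)

theorem isDownUpPair_up_down : IsDownUpPair a b φ (up a b φ) (down a b φ) where
  ddu := by simpa [up, down] using RingQuot.mkAlgHom_rel R (.ddu : DownUpRel a b φ _ _)
  duu := by simpa [up, down] using RingQuot.mkAlgHom_rel R (.duu : DownUpRel a b φ _ _)

theorem adjoin_up_down : Algebra.adjoin R {up a b φ, down a b φ} = ⊤ := by
  have range_gen : Set.range (FreeAlgebra.ι R : Gen → _) = {.ι R .u, .ι R .d} := by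
    ext x
    constructor
    · rintro ⟨_ | _, rfl⟩ <;> simp
    · rintro (rfl | rfl) <;> exact Set.mem_range_self _
  have map_adjoin := AlgHom.map_adjoin (RingQuot.mkAlgHom R (DownUpRel a b φ))
    (Set.range (FreeAlgebra.ι R))
  rw [FreeAlgebra.adjoin_range_ι, Algebra.map_top, range_gen, Set.image_pair,
    (AlgHom.range_eq_top _).2 (RingQuot.mkAlgHom_surjective R _)] at map_adjoin
  exact map_adjoin.symm

variable {a b φ} {u d : S}

/-- The algebra homomorphism out of the down-up algebra determined by a pair of elements satisfying
the down-up relations. -/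
noncomputable def lift (H : IsDownUpPair a b φ u d) : DownUpAlgebra a b φ →ₐ[R] S :=
  RingQuot.liftAlgHom R ⟨FreeAlgebra.lift R fun | .u => u | .d => d, by
    rintro _ _ (_ | _)
    · simpa using H.ddu
    · simpa using H.duu⟩

theorem lift_up (H : IsDownUpPair a b φ u d) : lift H (up a b φ) = u := by
  simp [lift, up]

theorem lift_down (H : IsDownUpPair a b φ u d) : lift H (down a b φ) = d := by
  simp [lift, down]

end DownUpAlgebra

theorem IsGeneralizedWeyl.isDownUpPair {B : Type*} [CommSemiring B] [Algebra R B] {σ : B ≃ₐ[R] B}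
    {h : B} {ι : B →ₐ[R] S} {u d : S} (H : IsGeneralizedWeyl σ h ι u d) {a b φ : R}
    (hσ : σ (σ h) = a • σ h + b • h + algebraMap R B φ) : IsDownUpPair a b φ u d where
  ddu :=
    calc d * d * u = d * ι (σ h) := by rw [mul_assoc, H.d_mul_u]
      _ = ι (σ (σ h)) * d := H.semiconjBy_d _
      _ = a • (ι (σ h) * d) + b • (ι h * d) + φ • d := by
        simp only [hσ, map_add, map_smul, AlgHom.commutes, add_mul, smul_mul_assoc,
          Algebra.smul_def φ]
      _ = a • (d * u * d) + b • (u * d * d) + φ • d := by rw [H.d_mul_u, H.u_mul_d]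
  duu :=
    calc d * u * u = ι (σ h) * u := by rw [H.d_mul_u]
      _ = u * ι (σ (σ h)) := (H.semiconjBy_u _).symm
      _ = a • (u * ι (σ h)) + b • (u * ι h) + φ • u := by
        simp only [hσ, map_add, map_smul, AlgHom.commutes, mul_add, mul_smul_comm,
          Algebra.smul_def φ, Algebra.commutes]
      _ = a • (u * d * u) + b • (u * u * d) + φ • u := by
        rw [← H.d_mul_u, ← H.u_mul_d, mul_assoc, mul_assoc]

namespace IsDownUpPair

variable {a b φ : R} {u d : S}

theorem commute (H : IsDownUpPair a b φ u d) : Commute (u * d) (d * u) :=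
  calc u * d * (d * u) = u * (d * d * u) := by simp only [mul_assoc]
    _ = a • (u * d * u * d) + b • (u * u * d * d) + φ • (u * d) := by
      simp only [H.ddu, mul_add, mul_smul_comm, mul_assoc]
    _ = d * u * u * d := by simp only [H.duu, add_mul, smul_mul_assoc]
    _ = d * u * (u * d) := mul_assoc _ _ _

/-- The homomorphism from `R[X 0, X 1]` that sends `X 0` to `u * d` and `X 1` to `d * u`. -/
noncomputable def weightHom (H : IsDownUpPair a b φ u d) : MvPolynomial (Fin 2) R →ₐ[R] S :=
  aevalOfCommute ![u * d, d * u] <| by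
    simpa [Fin.forall_fin_two] using ⟨H.commute, H.commute.symm⟩

theorem weightHom_X_zero (H : IsDownUpPair a b φ u d) : H.weightHom (X 0) = u * d :=
  aevalOfCommute_X _ _ 0

theorem weightHom_X_one (H : IsDownUpPair a b φ u d) : H.weightHom (X 1) = d * u :=
  aevalOfCommute_X _ _ 1

end IsDownUpPair

end DownUpAlgebra

section DownUpAut

variable {R S : Type*} [CommRing R] [Semiring S] [Algebra R S]

/-- The automorphism `X 0 ↦ X 1 ↦ a X 1 + b X 0 + φ`, which describes conjugation by `d` when
`X 0 = u * d` and `X 1 = d * u`. -/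
noncomputable def downUpAut (a : R) (b : Rˣ) (φ : R) :
    MvPolynomial (Fin 2) R ≃ₐ[R] MvPolynomial (Fin 2) R :=
  .ofAlgHom (aeval ![X 1, a • X 1 + b • X 0 + algebraMap R _ φ])
    (aeval ![b⁻¹ • (X 1 - a • X 0 - algebraMap R _ φ), X 0])
    (by
      ext1 i
      fin_cases i
      · suffices b⁻¹ • (a • X 1 + b • X 0 + C φ - a • X 1 - C φ) = (X 0 : MvPolynomial (Fin 2) R) by
          simpa [Units.smul_def]
        rw [sub_sub, add_assoc, add_sub_add_left_eq_sub, add_sub_cancel_right, inv_smul_smul]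
      · simp)
    (by
      ext1 i
      fin_cases i
      · simp
      · suffices a • X 0 + b • b⁻¹ • (X 1 - a • X 0 - C φ) + C φ = (X 1 : MvPolynomial (Fin 2) R) by
          simpa [Units.smul_def]
        rw [smul_inv_smul]
        abel)

theorem downUpAut_X_zero (a : R) (b : Rˣ) (φ : R) : downUpAut a b φ (X 0) = X 1 := by
  simp [downUpAut]

theorem downUpAut_X_one (a : R) (b : Rˣ) (φ : R) :
    downUpAut a b φ (X 1) = a • X 1 + b • X 0 + algebraMap R _ φ := by
  simp [downUpAut]

theorem IsDownUpPair.isGeneralizedWeyl {u d : S} {a φ : R} {b : Rˣ}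
    (H : IsDownUpPair a (b : R) φ u d) :
    IsGeneralizedWeyl (downUpAut a b φ) (X 0) H.weightHom u d where
  semiconjBy_d := by
    refine semiconjBy_algHom_of_X (g := H.weightHom.comp (downUpAut a b φ).toAlgHom) ?_
    simp only [SemiconjBy, Fin.forall_fin_two, AlgHom.comp_apply, AlgEquiv.toAlgHom_apply,
      downUpAut_X_zero, downUpAut_X_one, map_add, Units.smul_def, map_smul, AlgHom.commutes,
      H.weightHom_X_zero, H.weightHom_X_one]
    refine ⟨(mul_assoc _ _ _).symm, ?_⟩
    rw [← mul_assoc, H.ddu]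
    simp only [add_mul, smul_mul_assoc, Algebra.smul_def φ]
  semiconjBy_u := by
    refine semiconjBy_algHom_of_X (f := H.weightHom.comp (downUpAut a b φ).toAlgHom) ?_
    simp only [SemiconjBy, Fin.forall_fin_two, AlgHom.comp_apply, AlgEquiv.toAlgHom_apply,
      downUpAut_X_zero, downUpAut_X_one, map_add, Units.smul_def, map_smul, AlgHom.commutes,
      H.weightHom_X_zero, H.weightHom_X_one]
    refine ⟨(mul_assoc _ _ _).symm, ?_⟩
    rw [H.duu]
    simp only [mul_add, mul_smul_comm, mul_assoc, Algebra.smul_def φ, Algebra.commutes]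
  u_mul_d := H.weightHom_X_zero.symm
  d_mul_u := by rw [downUpAut_X_zero, H.weightHom_X_one]

theorem isDownUpPair_skewLaurent (a : R) (b : Rˣ) (φ : R) :
    IsDownUpPair a (b : R) φ
      (single (IntegerPowers.power (downUpAut a b φ) (-1)) (X 0) : SkewLaurent (downUpAut a b φ))
      (single (IntegerPowers.power (downUpAut a b φ) 1) 1) :=
  (isGeneralizedWeyl_skewLaurent _ _).isDownUpPair <| by
    rw [downUpAut_X_zero, downUpAut_X_one, Units.smul_def]

open DownUpAlgebra in
theorem lift_comp_weightHom (a : R) (b : Rˣ) (φ : R) :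
    (lift (isDownUpPair_skewLaurent a b φ)).comp (isDownUpPair_up_down a (b : R) φ).weightHom =
      SkewLaurent.coeffHom (downUpAut a b φ) := by
  have map_u_mul_d := (isGeneralizedWeyl_skewLaurent (downUpAut a b φ) (X 0)).u_mul_d
  have map_d_mul_u := (isGeneralizedWeyl_skewLaurent (downUpAut a b φ) (X 0)).d_mul_u
  rw [downUpAut_X_zero] at map_d_mul_u
  ext1 i
  fin_cases i
  · simpa [IsDownUpPair.weightHom_X_zero, lift_up, lift_down] using map_u_mul_d
  · simpa [IsDownUpPair.weightHom_X_one, lift_up, lift_down] using map_d_mul_u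

end DownUpAut

theorem rel_eq_downUpRel {K : Type} [Field K] {n : ℕ} (α β : K) (φ : MvPolynomial (Fin n) K) :
    Rel α β φ = DownUpRel (C α) (C β) φ := by
  have C_smul (r : K) (x : F K n) : (C r : MvPolynomial (Fin n) K) • x = r • x :=
    algebraMap_smul (MvPolynomial (Fin n) K) r x
  ext x y
  constructor
  · rintro (_ | _)
    · rw [← Algebra.smul_def, ← C_smul, ← C_smul]
      exact .ddu
    · rw [← Algebra.commutes, ← Algebra.smul_def, ← C_smul, ← C_smul]
      exact .duu
  · rintro (_ | _)
    · rw [C_smul, C_smul, Algebra.smul_def φ]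
      exact .ddu
    · rw [C_smul, C_smul, Algebra.smul_def φ, Algebra.commutes]
      exact .duu

end DownUp

open DownUp DownUpAlgebra in
theorem downUp_units_general {R : Type*} [CommRing R] [IsDomain R] (a b φ : R) (hb : IsUnit b)
    (x : DownUpAlgebra a b φ) (hx : IsUnit x) :
    ∃ r : R, IsUnit r ∧ x = algebraMap R (DownUpAlgebra a b φ) r := by
  obtain ⟨b, rfl⟩ := hb
  have H := isDownUpPair_up_down a (b : R) φ
  obtain ⟨p, hp, rfl⟩ := exists_isUnit_eq_of_isUnit (X_ne_zero 0) X_prime.not_isUnit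
    (lift_comp_weightHom a b φ) (lift_up _) (lift_down _)
    (H.isGeneralizedWeyl.normalForm_surjective (adjoin_up_down a (b : R) φ)) hx
  obtain ⟨r, hr, rfl⟩ := isUnit_iff_eq_C_of_isReduced.1 hp
  exact ⟨r, hr, H.weightHom.commutes r⟩

open DownUp in
/-- If β ≠ 0, every invertible element of A(α,β,φ) is a nonzero scalar. -/
theorem downUp_units {K : Type} [Field K] {n : ℕ}
    (α β : K) (hβ : β ≠ 0) (φ : MvPolynomial (Fin n) K) :
    ∀ a : A α β φ, IsUnit a → ∃ c : K, c ≠ 0 ∧ a = algebraMap K (A α β φ) c := by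
  unfold A
  rw [rel_eq_downUpRel]
  intro a ha
  obtain ⟨r, hr, rfl⟩ := downUp_units_general (C α) (C β) φ (hβ.isUnit.map C) a ha
  obtain ⟨c, hc, rfl⟩ := isUnit_iff_eq_C_of_isReduced.1 hr
  exact ⟨c, hc.ne_zero, (IsScalarTower.algebraMap_apply K (MvPolynomial (Fin n) K) _ c).symm⟩
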